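/- Let b and b' be elements of ℤ², each of the form (0,c) or (kc,c) with c a nonzero integer (the elements of subtype (1)β). For b = (0,b₂) set F_b := h_b and for b = (kb₂,b₂) set F_b := j_b, and likewise for b'. If F_b(u) = F_{b'}(u) for every real u, then b ≡ b', i.e. either b' = b, or b₁' = b₁ − kb₂ and b₂' = −b₂. -/

import Mathlib

noncomputable section

/-- `λ = τ - kσ`, the area parameter of the second section of the Hirzebruch surface. -/
def lamH (k : ℤ) (σ τ : ℝ) : ℝ := τ - (k : ℝ) * σ

/-- First coordinate of the centroid of the moment trapezoid with vertices
`(0,0), (σ,0), (0,τ), (σ,λ)`. -/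
def c₁H (k : ℤ) (σ τ : ℝ) : ℝ := σ * (τ + 2 * lamH k σ τ) / (3 * (τ + lamH k σ τ))

/-- Second coordinate of the centroid of the moment trapezoid. -/
def c₂H (k : ℤ) (σ τ : ℝ) : ℝ :=
  (τ ^ 2 + τ * lamH k σ τ + lamH k σ τ ^ 2) / (3 * (τ + lamH k σ τ))

/-- `q_b = c₁ b₁ + c₂ b₂`. -/
def qH (k : ℤ) (σ τ : ℝ) (b₁ b₂ : ℤ) : ℝ :=
  c₁H k σ τ * (b₁ : ℝ) + c₂H k σ τ * (b₂ : ℝ)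

/-- `g_b(u) = u² S_{ψ_b}(u)` for `b = (b₁, 0)` with `b₁ ≠ 0` (subtype (1)α). -/
def gH (k : ℤ) (σ τ : ℝ) (b₁ : ℤ) (u : ℝ) : ℝ :=
  Real.exp (qH k σ τ b₁ 0 * u) *
    (τ * u / (b₁ : ℝ) - (k : ℝ) / (b₁ : ℝ) ^ 2
      - Real.exp (-(σ * (b₁ : ℝ) * u)) *
          (lamH k σ τ * u / (b₁ : ℝ) - (k : ℝ) / (b₁ : ℝ) ^ 2))

/-- `h_b(u) = u² S_{ψ_b}(u)` for `b = (0, b₂)` with `b₂ ≠ 0` (first kind of subtype (1)β). -/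
def hH (k : ℤ) (σ τ : ℝ) (b₂ : ℤ) (u : ℝ) : ℝ :=
  Real.exp (qH k σ τ 0 b₂ * u) *
    (Real.exp (-(τ * (b₂ : ℝ) * u)) / ((k : ℝ) * (b₂ : ℝ) ^ 2)
      - Real.exp (-(lamH k σ τ * (b₂ : ℝ) * u)) / ((k : ℝ) * (b₂ : ℝ) ^ 2)
      + σ * u / (b₂ : ℝ))

/-- `j_b(u) = u² S_{ψ_b}(u)` for `b = (k b₂, b₂)` with `b₂ ≠ 0` (second kind of
subtype (1)β). -/
def jH (k : ℤ) (σ τ : ℝ) (b₂ : ℤ) (u : ℝ) : ℝ :=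
  Real.exp (qH k σ τ (k * b₂) b₂ * u) *
    (1 / ((k : ℝ) * (b₂ : ℝ) ^ 2)
      - Real.exp (-(σ * (k : ℝ) * (b₂ : ℝ) * u)) / ((k : ℝ) * (b₂ : ℝ) ^ 2)
      - σ * u * Real.exp (-(τ * (b₂ : ℝ) * u)) / (b₂ : ℝ))

end

/-- The function `u² S_{ψ_b}` attached to an element `b` of subtype (1)β, i.e. `b = (0, c)` or
`b = (kc, c)` with `c ≠ 0`: it is `h_b` in the first case and `j_b` in the second (for `k ≠ 0`
the two forms are distinguished by whether the first component vanishes). -/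
noncomputable def FH (k : ℤ) (σ τ : ℝ) (b : ℤ × ℤ) (u : ℝ) : ℝ :=
  if b.1 = 0 then hH k σ τ b.2 u else jH k σ τ b.2 u

/-!
The action `(k c, c)` has the same function as `(0, -c)`, so everything reduces to the injectivity
of `c ↦ h_{(0, c)}`. All these functions are rescalings `u ↦ (σ / c²) H (c u)` of one profile `H`,
and `H (r v) = C * H v` with `C ≠ 0` forces `r = 1`: as `v → ∞`, `H v` grows like `exp (c₂ v) * v`,
which settles `r > 0`, whereas `H (-v)` grows like a pure exponential, which excludes `r < 0`.
-/

open Filter Asymptotics Real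

section ExponentialMonomials

theorem isLittleO_exp_mul_pow_of_lt {α β : ℝ} (hαβ : α < β) (m n : ℕ) :
    (fun u : ℝ ↦ exp (α * u) * u ^ m) =o[atTop] fun u ↦ exp (β * u) * u ^ n := by
  have exp_gap : (fun u : ℝ ↦ exp (α * u) * u ^ m) =o[atTop] fun u ↦ exp (β * u) := by
    simpa only [rpow_natCast] using isLittleO_exp_mul_rpow_of_lt m hαβ
  refine exp_gap.trans_isBigO (IsBigO.of_norm_eventuallyLE ?_)
  filter_upwards [eventually_ge_atTop 1] with u hu
  rw [norm_of_nonneg (exp_pos _).le]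
  exact le_mul_of_one_le_right (exp_pos _).le (one_le_pow₀ hu)

theorem frequently_exp_mul_pow_ne_zero (α : ℝ) (m : ℕ) :
    ∃ᶠ u : ℝ in atTop, exp (α * u) * u ^ m ≠ 0 := by
  refine Eventually.frequently ?_
  filter_upwards [eventually_gt_atTop 0] with u hu
  positivity

theorem exp_rate_le_of_isTheta {α β : ℝ} {m n : ℕ}
    (h : (fun u : ℝ ↦ exp (α * u) * u ^ m) =Θ[atTop] fun u ↦ exp (β * u) * u ^ n) : β ≤ α :=
  le_of_not_gt fun hαβ ↦ (isLittleO_exp_mul_pow_of_lt hαβ m n).not_isBigO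
    (frequently_exp_mul_pow_ne_zero α m) h.symm.isBigO

theorem degree_le_of_isTheta {α : ℝ} {m n : ℕ}
    (h : (fun u : ℝ ↦ exp (α * u) * u ^ m) =Θ[atTop] fun u ↦ exp (α * u) * u ^ n) : n ≤ m :=
  le_of_not_gt fun hmn ↦
    ((isBigO_refl _ _).mul_isLittleO (isLittleO_pow_pow_atTop_of_lt hmn)).not_isBigO
      (frequently_exp_mul_pow_ne_zero α m) h.symm.isBigO

theorem exp_rate_eq_and_degree_eq_of_isTheta {α β : ℝ} {m n : ℕ}
    (h : (fun u : ℝ ↦ exp (α * u) * u ^ m) =Θ[atTop] fun u ↦ exp (β * u) * u ^ n) :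
    α = β ∧ m = n := by
  obtain rfl : α = β := le_antisymm (exp_rate_le_of_isTheta h.symm) (exp_rate_le_of_isTheta h)
  exact ⟨rfl, le_antisymm (degree_le_of_isTheta h.symm) (degree_le_of_isTheta h)⟩

theorem isTheta_exp_mul_pow_comp_mul {f : ℝ → ℝ} {α r : ℝ} {m : ℕ} (hr : 0 < r)
    (hf : f =Θ[atTop] fun u ↦ exp (α * u) * u ^ m) :
    (fun u ↦ f (r * u)) =Θ[atTop] fun u ↦ exp (α * r * u) * u ^ m := by
  have hr_atTop : Tendsto (fun u ↦ r * u) atTop atTop := tendsto_id.const_mul_atTop hr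
  have hf_comp : (fun u ↦ f (r * u)) =Θ[atTop] fun u ↦ exp (α * (r * u)) * (r * u) ^ m :=
    ⟨hf.1.comp_tendsto hr_atTop, hf.2.comp_tendsto hr_atTop⟩
  refine (isTheta_const_mul_right (pow_ne_zero m hr.ne')).1 ?_
  simpa only [mul_pow, mul_assoc, mul_left_comm] using hf_comp

end ExponentialMonomials

/-- The profile of which every `h_b` is a rescaling: `h_b(u) = (σ / b₂²) H (b₂ u)` with `a = c₂`,
`s = λ` and `t = τ`. Writing the coefficient `1 / k` of `h_b` as `σ / (t - s)` makes the profile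
symmetric in `s` and `t`, which saves a case split on the sign of `k`. -/
noncomputable def expProfile (a s t v : ℝ) : ℝ :=
  exp (a * v) * ((exp (-(t * v)) - exp (-(s * v))) / (t - s) + v)

namespace expProfile

variable {a s t : ℝ}

theorem swap (a s t : ℝ) : expProfile a s t = expProfile a t s := by
  funext v
  rw [expProfile, expProfile, ← neg_sub (exp (-(s * v))), ← neg_sub s t, neg_div_neg_eq]

theorem isTheta_atTop (hs : 0 < s) (ht : 0 < t) :
    expProfile a s t =Θ[atTop] fun v ↦ exp (a * v) * v ^ 1 := by
  have exp_decay {x : ℝ} (hx : 0 < x) : (fun v ↦ exp (-(x * v))) =o[atTop] fun v : ℝ ↦ v ^ 1 := by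
    simpa using isLittleO_exp_mul_pow_of_lt (neg_lt_zero.2 hx) 0 1
  have quotient_decay :
      (fun v ↦ (exp (-(t * v)) - exp (-(s * v))) / (t - s)) =o[atTop] fun v : ℝ ↦ v ^ 1 := by
    simpa only [div_eq_inv_mul] using ((exp_decay ht).sub (exp_decay hs)).const_mul_left (t - s)⁻¹
  refine isTheta_rfl.mul (quotient_decay.add_isTheta ?_)
  simpa only [pow_one] using isTheta_refl (fun v : ℝ ↦ v) atTop

theorem comp_neg_isTheta_atTop_of_lt (hst : s < t) (ht : 0 < t) :
    (fun v ↦ expProfile a s t (-v)) =Θ[atTop] fun v ↦ exp ((t - a) * v) * v ^ 0 := by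
  have exp_dominated : (fun v ↦ exp (s * v)) =o[atTop] fun v ↦ exp (t * v) := by
    simpa using isLittleO_exp_mul_pow_of_lt hst 0 0
  have linear_dominated : (fun v ↦ -v) =o[atTop] fun v ↦ exp (t * v) := by
    simpa using (isLittleO_exp_mul_pow_of_lt ht 1 0).neg_left
  have difference : (fun v ↦ exp (t * v) - exp (s * v)) =Θ[atTop] fun v ↦ exp (t * v) :=
    (IsEquivalent.refl.sub_isLittleO exp_dominated).isTheta
  have bracket : (fun v ↦ (exp (t * v) - exp (s * v)) / (t - s) + -v) =Θ[atTop]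
      fun v ↦ exp (t * v) := by
    refine IsTheta.add_isLittleO ?_ linear_dominated
    simpa only [div_eq_inv_mul] using
      (isTheta_const_mul_left (inv_ne_zero (sub_pos.2 hst).ne')).2 difference
  have product := (isTheta_refl (fun v ↦ exp (-(a * v))) atTop).mul bracket
  simpa only [expProfile, mul_neg, neg_neg, pow_zero, mul_one, sub_mul, ← exp_add,
    neg_add_eq_sub] using product

theorem comp_neg_isTheta_atTop (hst : s ≠ t) (hs : 0 < s) (ht : 0 < t) :
    (fun v ↦ expProfile a s t (-v)) =Θ[atTop] fun v ↦ exp ((max s t - a) * v) * v ^ 0 := by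
  rcases hst.lt_or_gt with hlt | hlt
  · rw [max_eq_right hlt.le]
    exact comp_neg_isTheta_atTop_of_lt hlt ht
  · rw [max_eq_left hlt.le, swap]
    exact comp_neg_isTheta_atTop_of_lt hlt hs

theorem eq_one_of_comp_mul_eq (ha : a ≠ 0) (hst : s ≠ t) (hs : 0 < s) (ht : 0 < t)
    {r C : ℝ} (hr : r ≠ 0) (hC : C ≠ 0)
    (h : ∀ v, expProfile a s t (r * v) = C * expProfile a s t v) : r = 1 := by
  have growth : (fun v ↦ expProfile a s t (r * v)) =Θ[atTop] fun v ↦ exp (a * v) * v ^ 1 := by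
    simpa only [h] using (isTheta_const_mul_left hC).2 (isTheta_atTop hs ht)
  rcases hr.lt_or_gt with hneg | hpos
  · have growth_scaled : (fun v ↦ expProfile a s t (r * v)) =Θ[atTop]
        fun v ↦ exp ((max s t - a) * -r * v) * v ^ 0 := by
      simpa only [neg_mul, neg_neg] using
        isTheta_exp_mul_pow_comp_mul (neg_pos.2 hneg) (comp_neg_isTheta_atTop hst hs ht)
    have degree_eq : 0 = 1 :=
      (exp_rate_eq_and_degree_eq_of_isTheta (growth_scaled.symm.trans growth)).2
    exact absurd degree_eq zero_ne_one
  · have growth_scaled : (fun v ↦ expProfile a s t (r * v)) =Θ[atTop]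
        fun v ↦ exp (a * r * v) * v ^ 1 :=
      isTheta_exp_mul_pow_comp_mul hpos (isTheta_atTop hs ht)
    have rate_eq : a * r = a :=
      (exp_rate_eq_and_degree_eq_of_isTheta (growth_scaled.symm.trans growth)).1
    exact (mul_eq_left₀ ha).1 rate_eq

end expProfile

section Hirzebruch

variable {k : ℤ} {σ τ : ℝ}

theorem c₂H_pos (hτ : 0 < τ) (hlam : 0 < lamH k σ τ) : 0 < c₂H k σ τ := by
  unfold c₂H
  positivity

theorem lamH_ne_τ (hk : k ≠ 0) (hσ : σ ≠ 0) : lamH k σ τ ≠ τ := by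
  simp [lamH, hk, hσ]

theorem c₁H_mul_k (hsum : τ + lamH k σ τ ≠ 0) : c₁H k σ τ * k = τ - 2 * c₂H k σ τ := by
  have slope : (k : ℝ) * σ = τ - lamH k σ τ := by rw [lamH, sub_sub_cancel]
  unfold c₁H c₂H
  field_simp
  linear_combination (τ + 2 * lamH k σ τ) * slope

theorem hH_eq_expProfile (hσ : σ ≠ 0) (c : ℤ) (u : ℝ) :
    hH k σ τ c u = σ / (c : ℝ) ^ 2 * expProfile (c₂H k σ τ) (lamH k σ τ) τ (c * u) := by
  have slope : τ - lamH k σ τ = k * σ := by rw [lamH, sub_sub_cancel]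
  simp only [hH, qH, expProfile, slope, Int.cast_zero, mul_zero, zero_add, mul_assoc]
  field_simp

theorem eq_of_hH_eq (hk : k ≠ 0) (hσ : σ ≠ 0) (hτ : 0 < τ) (hlam : 0 < lamH k σ τ)
    {c d : ℤ} (hc : c ≠ 0) (hd : d ≠ 0) (h : ∀ u, hH k σ τ c u = hH k σ τ d u) : c = d := by
  have hc' : (c : ℝ) ≠ 0 := Int.cast_ne_zero.2 hc
  have hd' : (d : ℝ) ≠ 0 := Int.cast_ne_zero.2 hd
  have scaling (v : ℝ) : expProfile (c₂H k σ τ) (lamH k σ τ) τ (d / c * v) =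
      (d / c) ^ 2 * expProfile (c₂H k σ τ) (lamH k σ τ) τ v := by
    have hv := h (v / c)
    rw [hH_eq_expProfile hσ, hH_eq_expProfile hσ, mul_div_cancel₀ _ hc', ← mul_comm_div] at hv
    field_simp at hv ⊢
    exact hv.symm
  have ratio_eq_one : (d / c : ℝ) = 1 :=
    expProfile.eq_one_of_comp_mul_eq (c₂H_pos hτ hlam).ne' (lamH_ne_τ hk hσ) hlam hτ
      (div_ne_zero hd' hc') (pow_ne_zero 2 (div_ne_zero hd' hc')) scaling
  exact_mod_cast ((div_eq_one_iff_eq hc').1 ratio_eq_one).symm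

theorem jH_eq_hH_neg (hsum : τ + lamH k σ τ ≠ 0) (c : ℤ) (u : ℝ) :
    jH k σ τ c u = hH k σ τ (-c) u := by
  have weight : qH k σ τ (k * c) c = qH k σ τ 0 (-c) + τ * c := by
    unfold qH
    push_cast
    linear_combination (c : ℝ) * c₁H_mul_k hsum
  simp only [jH, hH, weight]
  push_cast
  set q := qH k σ τ 0 (-c)
  have const_term : exp ((q + τ * c) * u) = exp (q * u) * exp (-(τ * -c * u)) := by
    rw [← exp_add]
    ring_nf
  have exp_term : exp ((q + τ * c) * u) * exp (-(σ * k * c * u)) =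
      exp (q * u) * exp (-(lamH k σ τ * -c * u)) := by
    rw [← exp_add, ← exp_add, lamH]
    ring_nf
  have linear_term : exp ((q + τ * c) * u) * exp (-(τ * c * u)) = exp (q * u) := by
    rw [← exp_add]
    ring_nf
  rw [neg_sq, div_neg]
  linear_combination (1 / ((k : ℝ) * (c : ℝ) ^ 2)) * const_term
    - (1 / ((k : ℝ) * (c : ℝ) ^ 2)) * exp_term - (σ * u / c) * linear_term

theorem FH_zero_left (c : ℤ) : FH k σ τ (0, c) = hH k σ τ c := by
  funext u
  simp [FH]

theorem FH_mul_left (hk : k ≠ 0) (hsum : τ + lamH k σ τ ≠ 0) {c : ℤ} (hc : c ≠ 0) :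
    FH k σ τ (k * c, c) = hH k σ τ (-c) := by
  funext u
  simp [FH, hk, hc, jH_eq_hH_neg hsum]

end Hirzebruch

/-- Proposition 3.14 (PropSubt1beta) of the paper: if `b` and `b'` are of subtype (1)β and
their functions `u² S_{ψ_b}` agree, then `b ≡ b'`, i.e. `b' = b` or
`b' = (b₁ - k b₂, -b₂)`. -/
theorem hirzebruch_subtype1beta
    (k : ℤ) (hk : k ≠ 0) (σ τ : ℝ) (hσ : 0 < σ) (hτ : 0 < τ) (hlam : 0 < lamH k σ τ)
    (b b' : ℤ × ℤ)
    (hb : (∃ c : ℤ, c ≠ 0 ∧ b = (0, c)) ∨ (∃ c : ℤ, c ≠ 0 ∧ b = (k * c, c)))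
    (hb' : (∃ c : ℤ, c ≠ 0 ∧ b' = (0, c)) ∨ (∃ c : ℤ, c ≠ 0 ∧ b' = (k * c, c)))
    (h : ∀ u : ℝ, FH k σ τ b u = FH k σ τ b' u) :
    b' = b ∨ (b'.1 = b.1 - k * b.2 ∧ b'.2 = -b.2) := by
  have hsum : τ + lamH k σ τ ≠ 0 := (add_pos hτ hlam).ne'
  have inj {c d : ℤ} (hc : c ≠ 0) (hd : d ≠ 0) (hcd : ∀ u, hH k σ τ c u = hH k σ τ d u) : c = d :=
    eq_of_hH_eq hk hσ.ne' hτ hlam hc hd hcd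
  rcases hb with ⟨c, hc, rfl⟩ | ⟨c, hc, rfl⟩ <;> rcases hb' with ⟨d, hd, rfl⟩ | ⟨d, hd, rfl⟩ <;>
    simp only [FH_zero_left, FH_mul_left hk hsum, hc, hd, ne_eq, not_false_eq_true] at h
  · obtain rfl := inj hc hd h
    exact .inl rfl
  · obtain rfl := inj hc (neg_ne_zero.2 hd) h
    simp
  · obtain rfl := inj (neg_ne_zero.2 hc) hd h
    simp
  · obtain rfl := neg_inj.1 (inj (neg_ne_zero.2 hc) (neg_ne_zero.2 hd) h)
    exact .inl rfl
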